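/- arXiv:2401.14875 — 5 statements merged into one kernel-verified Lean document; each statement's English description precedes it below -/
import Mathlib

section
/- Let (C, Δ_C, R_C) be a λ-weighted Rota-Baxter Lie coalgebra over a field k. Then the dual space C* equipped with the bracket [f,g] = (f⊗g)∘Δ_C is a Lie algebra, and the map R_C* : C* → C* given by R_C*(f) = f∘R_C satisfies [R_C*(f), R_C*(g)] = R_C*([R_C*(f), g] + [f, R_C*(g)] + λ[f,g]) for all f,g ∈ C*; that is, (C*, [·,·], R_C*) is a Rota-Baxter Lie algebra of weight λ. -/
/-!
STATEMENT 0: The dual of a `λ`-weighted Rota-Baxter Lie coalgebra `(C, Δ_C, R_C)`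
is a `λ`-weighted Rota-Baxter Lie algebra `(C*, [·,·], R_C*)`, where
`[f,g] = (f⊗g)∘Δ_C` and `R_C*(f) = f∘R_C`.
-/

open TensorProduct LinearMap

section

variable {k : Type*} [Field k]
variable {C : Type*} [AddCommGroup C] [Module k C]

/-- Co-antisymmetry of a cobracket: `Δ = -τΔ`. -/
def CoAnti (Δ : C →ₗ[k] C ⊗[k] C) : Prop :=
  Δ = -((TensorProduct.comm k C C).toLinearMap ∘ₗ Δ)

/-- The co-Jacobi identity `(I⊗Δ)Δ - (Δ⊗I)Δ + (I⊗τ)(Δ⊗I)Δ = 0`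
(with the canonical associator inserted). -/
def CoJacobi (Δ : C →ₗ[k] C ⊗[k] C) : Prop :=
  lTensor C Δ ∘ₗ Δ
    - (TensorProduct.assoc k C C C).toLinearMap ∘ₗ rTensor C Δ ∘ₗ Δ
    + lTensor C (TensorProduct.comm k C C).toLinearMap ∘ₗ
        (TensorProduct.assoc k C C C).toLinearMap ∘ₗ rTensor C Δ ∘ₗ Δ = 0

/-- The `λ`-weighted Rota-Baxter identity for a coalgebra:
`(R⊗R)Δ = (I⊗R + R⊗I + λI) Δ R`. -/
def IsRBO (lam : k) (Δ : C →ₗ[k] C ⊗[k] C) (R : C →ₗ[k] C) : Prop :=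
  TensorProduct.map R R ∘ₗ Δ
    = (lTensor C R + rTensor C R + lam • (LinearMap.id : C ⊗[k] C →ₗ[k] C ⊗[k] C)) ∘ₗ Δ ∘ₗ R

/-- `λ`-weighted Rota-Baxter Lie coalgebra. -/
def IsRBLC (lam : k) (Δ : C →ₗ[k] C ⊗[k] C) (R : C →ₗ[k] C) : Prop :=
  CoAnti Δ ∧ CoJacobi Δ ∧ IsRBO lam Δ R

/-- The dual bracket `[f,g] = (f⊗g)∘Δ` on `C* = Module.Dual k C`. -/
noncomputable def dualBracket (Δ : C →ₗ[k] C ⊗[k] C) (f g : Module.Dual k C) :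
    Module.Dual k C :=
  (TensorProduct.lid k k).toLinearMap ∘ₗ TensorProduct.map f g ∘ₗ Δ

/-- The dual Rota-Baxter operator `R_C*(f) = f ∘ R_C`. -/
def dualRB (R : C →ₗ[k] C) (f : Module.Dual k C) : Module.Dual k C := f ∘ₗ R

/-!
Applying functionals to each identity of `C` dualizes it, since the pairing of `f ⊗ g` with
`C ⊗ C` is compatible with the flip, the associator and tensor products of maps. Pairing
`f ⊗ g ⊗ h` with the co-Jacobi identity gives `[f, [g, h]] - [[f, g], h] + [[f, h], g] = 0`, which
antisymmetry turns into the cyclic Jacobi identity; pairing `f ⊗ g` with the Rota-Baxter identity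
of `R` gives that of `f ↦ f ∘ R`.
-/

section DualDistrib

variable {A M N P M' N' : Type*} [CommSemiring A]
  [AddCommMonoid M] [AddCommMonoid N] [AddCommMonoid P] [AddCommMonoid M'] [AddCommMonoid N']
  [Module A M] [Module A N] [Module A P] [Module A M'] [Module A N']

theorem dualDistrib_tmul_comp_map (f : Module.Dual A M') (g : Module.Dual A N')
    (φ : M →ₗ[A] M') (ψ : N →ₗ[A] N') :
    dualDistrib A M' N' (f ⊗ₜ g) ∘ₗ TensorProduct.map φ ψ
      = dualDistrib A M N ((f ∘ₗ φ) ⊗ₜ (g ∘ₗ ψ)) :=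
  TensorProduct.ext' fun _ _ => rfl

theorem dualDistrib_tmul_comp_comm (f : Module.Dual A M) (g : Module.Dual A N) :
    dualDistrib A M N (f ⊗ₜ g) ∘ₗ (TensorProduct.comm A N M).toLinearMap
      = dualDistrib A N M (g ⊗ₜ f) :=
  LinearMap.ext (dualDistrib_apply_comm (f ⊗ₜ g))

theorem dualDistrib_tmul_comp_assoc (f : Module.Dual A M) (g : Module.Dual A N)
    (h : Module.Dual A P) :
    dualDistrib A M (N ⊗[A] P) (f ⊗ₜ dualDistrib A N P (g ⊗ₜ h)) ∘ₗ
        (TensorProduct.assoc A M N P).toLinearMap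
      = dualDistrib A (M ⊗[A] N) P (dualDistrib A M N (f ⊗ₜ g) ⊗ₜ h) :=
  TensorProduct.ext_threefold fun _ _ _ => (mul_assoc _ _ _).symm

end DualDistrib

section DualBracket

variable (Δ : C →ₗ[k] C ⊗[k] C) (f g h : Module.Dual k C)

theorem dualBracket_eq_dualDistrib_comp :
    dualBracket Δ f g = dualDistrib k C C (f ⊗ₜ g) ∘ₗ Δ :=
  rfl

theorem dualBracket_neg_left : dualBracket Δ (-f) g = -dualBracket Δ f g := by
  have hneg : dualDistrib k C C ((-f) ⊗ₜ g) = -dualDistrib k C C (f ⊗ₜ g) :=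
    TensorProduct.ext' fun _ _ => neg_mul _ _
  rw [dualBracket_eq_dualDistrib_comp, hneg, neg_comp, dualBracket_eq_dualDistrib_comp]

theorem dualBracket_dualBracket_right :
    dualBracket Δ f (dualBracket Δ g h)
      = dualDistrib k C (C ⊗[k] C) (f ⊗ₜ dualDistrib k C C (g ⊗ₜ h)) ∘ₗ lTensor C Δ ∘ₗ Δ :=
  congrArg (· ∘ₗ Δ) (dualDistrib_tmul_comp_map f (dualDistrib k C C (g ⊗ₜ h)) id Δ).symm

theorem dualBracket_dualBracket_left :
    dualBracket Δ (dualBracket Δ f g) h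
      = dualDistrib k C (C ⊗[k] C) (f ⊗ₜ dualDistrib k C C (g ⊗ₜ h)) ∘ₗ
          (TensorProduct.assoc k C C C).toLinearMap ∘ₗ rTensor C Δ ∘ₗ Δ := by
  rw [← comp_assoc, dualDistrib_tmul_comp_assoc]
  exact congrArg (· ∘ₗ Δ) (dualDistrib_tmul_comp_map (dualDistrib k C C (f ⊗ₜ g)) h Δ id).symm

variable {Δ}

theorem CoAnti.dualBracket_eq_neg (hΔ : CoAnti Δ) : dualBracket Δ f g = -dualBracket Δ g f :=
  calc dualBracket Δ f g
      = dualDistrib k C C (f ⊗ₜ g) ∘ₗ (-((TensorProduct.comm k C C).toLinearMap ∘ₗ Δ)) :=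
        congrArg (dualDistrib k C C (f ⊗ₜ g) ∘ₗ ·) hΔ
    _ = -((dualDistrib k C C (f ⊗ₜ g) ∘ₗ (TensorProduct.comm k C C).toLinearMap) ∘ₗ Δ) :=
        comp_neg _ _
    _ = -dualBracket Δ g f := by
        rw [dualDistrib_tmul_comp_comm, dualBracket_eq_dualDistrib_comp]

theorem CoJacobi.dualBracket_leibniz (hΔ : CoJacobi Δ) :
    dualBracket Δ f (dualBracket Δ g h) - dualBracket Δ (dualBracket Δ f g) h
      + dualBracket Δ (dualBracket Δ f h) g = 0 := by
  have hswap : dualDistrib k C (C ⊗[k] C) (f ⊗ₜ dualDistrib k C C (h ⊗ₜ g))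
      = dualDistrib k C (C ⊗[k] C) (f ⊗ₜ dualDistrib k C C (g ⊗ₜ h)) ∘ₗ
          lTensor C (TensorProduct.comm k C C).toLinearMap := by
    rw [lTensor, dualDistrib_tmul_comp_map, dualDistrib_tmul_comp_comm, comp_id]
  rw [dualBracket_dualBracket_right, dualBracket_dualBracket_left, dualBracket_dualBracket_left,
    hswap, comp_assoc, ← comp_sub, ← comp_add, hΔ, comp_zero]

theorem dualBracket_jacobi (hanti : CoAnti Δ) (hjac : CoJacobi Δ) :
    dualBracket Δ (dualBracket Δ f g) h + dualBracket Δ (dualBracket Δ g h) f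
      + dualBracket Δ (dualBracket Δ h f) g = 0 := by
  have hgh : dualBracket Δ (dualBracket Δ g h) f = -dualBracket Δ f (dualBracket Δ g h) :=
    hanti.dualBracket_eq_neg _ _
  have hhf : dualBracket Δ (dualBracket Δ h f) g = -dualBracket Δ (dualBracket Δ f h) g := by
    rw [hanti.dualBracket_eq_neg h f, dualBracket_neg_left]
  rw [hgh, hhf, ← neg_eq_zero, ← hjac.dualBracket_leibniz f g h]
  abel

theorem IsRBO.dualBracket_dualRB {lam : k} {R : C →ₗ[k] C} (hR : IsRBO lam Δ R) :
    dualBracket Δ (dualRB R f) (dualRB R g)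
      = dualRB R (dualBracket Δ (dualRB R f) g + dualBracket Δ f (dualRB R g)
          + lam • dualBracket Δ f g) := by
  let fg := dualDistrib k C C (f ⊗ₜ g)
  have hleft : dualBracket Δ (dualRB R f) g = fg ∘ₗ rTensor C R ∘ₗ Δ :=
    congrArg (· ∘ₗ Δ) (dualDistrib_tmul_comp_map f g R id).symm
  have hright : dualBracket Δ f (dualRB R g) = fg ∘ₗ lTensor C R ∘ₗ Δ :=
    congrArg (· ∘ₗ Δ) (dualDistrib_tmul_comp_map f g id R).symm
  calc dualBracket Δ (dualRB R f) (dualRB R g)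
      = fg ∘ₗ TensorProduct.map R R ∘ₗ Δ :=
        congrArg (· ∘ₗ Δ) (dualDistrib_tmul_comp_map f g R R).symm
    _ = fg ∘ₗ (lTensor C R + rTensor C R + lam • LinearMap.id) ∘ₗ Δ ∘ₗ R :=
        congrArg (fg ∘ₗ ·) hR
    _ = (fg ∘ₗ rTensor C R ∘ₗ Δ + fg ∘ₗ lTensor C R ∘ₗ Δ + lam • (fg ∘ₗ Δ)) ∘ₗ R := by
        simp only [add_comp, comp_add, smul_comp, comp_smul, id_comp, comp_assoc]
        abel
    _ = dualRB R (dualBracket Δ (dualRB R f) g + dualBracket Δ f (dualRB R g)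
          + lam • dualBracket Δ f g) := by
        rw [hleft, hright, dualBracket_eq_dualDistrib_comp, dualRB]

end DualBracket

theorem stmt0 (lam : k) (Δ : C →ₗ[k] C ⊗[k] C) (R : C →ₗ[k] C)
    (hC : IsRBLC lam Δ R) :
    -- `C*` with the bracket `[f,g] = (f⊗g)Δ` is a Lie algebra:
    (∀ f g : Module.Dual k C, dualBracket Δ f g = -dualBracket Δ g f) ∧
    (∀ f g h : Module.Dual k C,
      dualBracket Δ (dualBracket Δ f g) h + dualBracket Δ (dualBracket Δ g h) f
        + dualBracket Δ (dualBracket Δ h f) g = 0) ∧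
    -- and `R_C*` is a Rota-Baxter operator of weight `λ` on it:
    (∀ f g : Module.Dual k C,
      dualBracket Δ (dualRB R f) (dualRB R g)
        = dualRB R (dualBracket Δ (dualRB R f) g + dualBracket Δ f (dualRB R g)
            + lam • dualBracket Δ f g)) := by
  obtain ⟨hanti, hjac, hR⟩ := hC
  exact ⟨fun f g => hanti.dualBracket_eq_neg f g,
    fun f g h => dualBracket_jacobi f g h hanti hjac,
    fun f g => hR.dualBracket_dualRB f g⟩

end
end

section
/- Let (C, Δ_C, R_C) be a λ-weighted Rota-Baxter Lie coalgebra and define Δ̃_C = (I⊗R_C + R_C⊗I + λI)Δ_C. Then (C, Δ̃_C, R_C) is again a λ-weighted Rota-Baxter Lie coalgebra: Δ̃_C = −τΔ̃_C, the co-Jacobi identity (I⊗Δ̃_C)Δ̃_C − (Δ̃_C⊗I)Δ̃_C + (I⊗τ)(Δ̃_C⊗I)Δ̃_C = 0 holds, and (R_C⊗R_C)Δ̃_C = (I⊗R_C + R_C⊗I + λI)Δ̃_C R_C. -/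
/-!
STATEMENT 1: If `(C, Δ_C, R_C)` is a `λ`-weighted Rota-Baxter Lie coalgebra and
`Δ̃_C = (I⊗R_C + R_C⊗I + λI) ∘ Δ_C`, then `(C, Δ̃_C, R_C)` is again a `λ`-weighted
Rota-Baxter Lie coalgebra.
-/

open TensorProduct LinearMap

section

variable {k : Type*} [Field k]
variable {C : Type*} [AddCommGroup C] [Module k C]

/-!
Put `P_n = λ⁻¹((R + λ)^{⊗n} - R^{⊗n})`, a polynomial in `R` and `λ` that makes sense for `λ = 0`
as well. The deformed cobracket is `P₂Δ`, and the Rota-Baxter identity reads `(R ⊗ R)Δ = P₂ΔR`.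
Since `P₃ = (R + λ) ⊗ P₂ + I ⊗ (R ⊗ R)`, the latter gives `(I ⊗ P₂Δ)P₂ = P₃(I ⊗ Δ)`, and
symmetrically `(P₂Δ ⊗ I)P₂ = P₃(Δ ⊗ I)`. As `P₃` commutes with `I ⊗ τ`, the co-Jacobi expression of
`P₂Δ` is `P₃` applied to that of `Δ`. The other two axioms are inherited because `P₂` commutes with
`τ` and with `R ⊗ R`.
-/

section DividedDiff

variable {A : Type*} [CommSemiring A] {M : Type*} [AddCommMonoid M] [Module A M]
variable (lam : A) (R : M →ₗ[A] M)

/-- The operator `P₂ = I ⊗ R + R ⊗ I + λI` that deforms a cobracket; it is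
`λ⁻¹((R + λ)^{⊗2} - R^{⊗2})` with the division carried out. -/
def dividedDiff₂ : M ⊗[A] M →ₗ[A] M ⊗[A] M :=
  lTensor M R + rTensor M R + lam • LinearMap.id

/-- The operator `P₃ = λ⁻¹((R + λ)^{⊗3} - R^{⊗3})` on the threefold tensor power, through which the
co-Jacobi expression is deformed. It is encoded by the recursion
`P₃ = (R + λ) ⊗ P₂ + I ⊗ (R ⊗ R)`. -/
def dividedDiff₃ : M ⊗[A] (M ⊗[A] M) →ₗ[A] M ⊗[A] (M ⊗[A] M) :=
  map (R + lam • LinearMap.id) (dividedDiff₂ lam R) + lTensor M (map R R)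

theorem dividedDiff₂_eq_rTensor_add_lTensor :
    dividedDiff₂ lam R = rTensor M (R + lam • LinearMap.id) + lTensor M R := by
  rw [dividedDiff₂, rTensor_add, rTensor_smul, rTensor_id]
  abel

theorem dividedDiff₂_eq_lTensor_add_rTensor :
    dividedDiff₂ lam R = lTensor M (R + lam • LinearMap.id) + rTensor M R := by
  rw [dividedDiff₂, lTensor_add, lTensor_smul, lTensor_id]
  abel

theorem comm_comp_dividedDiff₂ :
    (TensorProduct.comm A M M).toLinearMap ∘ₗ dividedDiff₂ lam R =
      dividedDiff₂ lam R ∘ₗ (TensorProduct.comm A M M).toLinearMap := by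
  ext x y
  simp [dividedDiff₂, add_comm]

theorem map_comp_dividedDiff₂ :
    map R R ∘ₗ dividedDiff₂ lam R = dividedDiff₂ lam R ∘ₗ map R R := by
  ext x y
  simp [dividedDiff₂]

theorem dividedDiff₃_comp_assoc :
    dividedDiff₃ lam R ∘ₗ (TensorProduct.assoc A M M M).toLinearMap =
      (TensorProduct.assoc A M M M).toLinearMap ∘ₗ
        (map (dividedDiff₂ lam R) (R + lam • LinearMap.id) + rTensor M (map R R)) := by
  ext x y z
  simp only [dividedDiff₃, dividedDiff₂, AlgebraTensorModule.curry_apply, restrictScalars_self,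
    curry_apply, coe_comp, LinearEquiv.coe_coe, Function.comp_apply, assoc_tmul,
    LinearMap.add_apply, map_tmul, LinearMap.smul_apply, id_coe, id_eq, lTensor_tmul, rTensor_tmul,
    tmul_add, add_tmul, ← smul_tmul', tmul_smul, smul_add, map_add, map_smul]
  module

theorem lTensor_comm_comp_dividedDiff₃ :
    lTensor M (TensorProduct.comm A M M).toLinearMap ∘ₗ dividedDiff₃ lam R =
      dividedDiff₃ lam R ∘ₗ lTensor M (TensorProduct.comm A M M).toLinearMap := by
  simp only [dividedDiff₃, comp_add, add_comp, lTensor_comp_map, map_comp_lTensor, ← lTensor_comp,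
    comm_comp_dividedDiff₂, map_comp_comm_eq]

variable {lam R} {Δ : M →ₗ[A] M ⊗[A] M}

theorem lTensor_dividedDiff₂_comp (hR : map R R ∘ₗ Δ = dividedDiff₂ lam R ∘ₗ Δ ∘ₗ R) :
    lTensor M (dividedDiff₂ lam R ∘ₗ Δ) ∘ₗ dividedDiff₂ lam R =
      dividedDiff₃ lam R ∘ₗ lTensor M Δ := by
  set P := dividedDiff₂ lam R
  calc lTensor M (P ∘ₗ Δ) ∘ₗ P
      = lTensor M (P ∘ₗ Δ) ∘ₗ (rTensor M (R + lam • LinearMap.id) + lTensor M R) :=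
        congrArg _ (dividedDiff₂_eq_rTensor_add_lTensor lam R)
    _ = map (R + lam • LinearMap.id) (P ∘ₗ Δ) + lTensor M (P ∘ₗ Δ ∘ₗ R) := by
        rw [comp_add, lTensor_comp_rTensor, ← lTensor_comp, comp_assoc]
    _ = map (R + lam • LinearMap.id) (P ∘ₗ Δ) + lTensor M (map R R ∘ₗ Δ) := by rw [hR]
    _ = dividedDiff₃ lam R ∘ₗ lTensor M Δ := by
        rw [dividedDiff₃, add_comp, map_comp_lTensor, ← lTensor_comp]

theorem rTensor_dividedDiff₂_comp (hR : map R R ∘ₗ Δ = dividedDiff₂ lam R ∘ₗ Δ ∘ₗ R) :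
    rTensor M (dividedDiff₂ lam R ∘ₗ Δ) ∘ₗ dividedDiff₂ lam R =
      (map (dividedDiff₂ lam R) (R + lam • LinearMap.id) + rTensor M (map R R)) ∘ₗ
        rTensor M Δ := by
  set P := dividedDiff₂ lam R
  calc rTensor M (P ∘ₗ Δ) ∘ₗ P
      = rTensor M (P ∘ₗ Δ) ∘ₗ (lTensor M (R + lam • LinearMap.id) + rTensor M R) :=
        congrArg _ (dividedDiff₂_eq_lTensor_add_rTensor lam R)
    _ = map (P ∘ₗ Δ) (R + lam • LinearMap.id) + rTensor M (P ∘ₗ Δ ∘ₗ R) := by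
        rw [comp_add, rTensor_comp_lTensor, ← rTensor_comp, comp_assoc]
    _ = map (P ∘ₗ Δ) (R + lam • LinearMap.id) + rTensor M (map R R ∘ₗ Δ) := by rw [hR]
    _ = (map P (R + lam • LinearMap.id) + rTensor M (map R R)) ∘ₗ rTensor M Δ := by
        rw [add_comp, map_comp_rTensor, ← rTensor_comp]

theorem assoc_comp_rTensor_dividedDiff₂_comp
    (hR : map R R ∘ₗ Δ = dividedDiff₂ lam R ∘ₗ Δ ∘ₗ R) :
    (TensorProduct.assoc A M M M).toLinearMap ∘ₗ
        rTensor M (dividedDiff₂ lam R ∘ₗ Δ) ∘ₗ dividedDiff₂ lam R =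
      dividedDiff₃ lam R ∘ₗ (TensorProduct.assoc A M M M).toLinearMap ∘ₗ rTensor M Δ := by
  rw [rTensor_dividedDiff₂_comp hR, ← comp_assoc, ← dividedDiff₃_comp_assoc, comp_assoc]

end DividedDiff

section Deformation

variable {A : Type*} [CommSemiring A] {M : Type*} [AddCommGroup M] [Module A M]

/-- The co-Jacobi expression of a cobracket `Δ`, that is the left-hand side of the co-Jacobi
identity, over an arbitrary commutative semiring. -/
def coJacobiator (Δ : M →ₗ[A] M ⊗[A] M) : M →ₗ[A] M ⊗[A] (M ⊗[A] M) :=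
  lTensor M Δ ∘ₗ Δ
    - (TensorProduct.assoc A M M M).toLinearMap ∘ₗ rTensor M Δ ∘ₗ Δ
    + lTensor M (TensorProduct.comm A M M).toLinearMap ∘ₗ
        (TensorProduct.assoc A M M M).toLinearMap ∘ₗ rTensor M Δ ∘ₗ Δ

theorem coJacobiator_dividedDiff₂_comp {lam : A} {R : M →ₗ[A] M} {Δ : M →ₗ[A] M ⊗[A] M}
    (hR : map R R ∘ₗ Δ = dividedDiff₂ lam R ∘ₗ Δ ∘ₗ R) :
    coJacobiator (dividedDiff₂ lam R ∘ₗ Δ) = dividedDiff₃ lam R ∘ₗ coJacobiator Δ := by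
  have left : lTensor M (dividedDiff₂ lam R ∘ₗ Δ) ∘ₗ dividedDiff₂ lam R ∘ₗ Δ =
      dividedDiff₃ lam R ∘ₗ lTensor M Δ ∘ₗ Δ :=
    congrArg (· ∘ₗ Δ) (lTensor_dividedDiff₂_comp hR)
  have right : (TensorProduct.assoc A M M M).toLinearMap ∘ₗ
        rTensor M (dividedDiff₂ lam R ∘ₗ Δ) ∘ₗ dividedDiff₂ lam R ∘ₗ Δ =
      dividedDiff₃ lam R ∘ₗ (TensorProduct.assoc A M M M).toLinearMap ∘ₗ rTensor M Δ ∘ₗ Δ :=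
    congrArg (· ∘ₗ Δ) (assoc_comp_rTensor_dividedDiff₂_comp hR)
  rw [coJacobiator, left, right, ← comp_assoc _ (dividedDiff₃ lam R),
    lTensor_comm_comp_dividedDiff₃, comp_assoc, ← comp_sub, ← comp_add, coJacobiator]

theorem stmt1_general (lam : A) (Δ : M →ₗ[A] M ⊗[A] M) (R : M →ₗ[A] M)
    (hanti : Δ = -((TensorProduct.comm A M M).toLinearMap ∘ₗ Δ))
    (hjacobi : coJacobiator Δ = 0)
    (hR : map R R ∘ₗ Δ = dividedDiff₂ lam R ∘ₗ Δ ∘ₗ R) :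
    dividedDiff₂ lam R ∘ₗ Δ =
        -((TensorProduct.comm A M M).toLinearMap ∘ₗ dividedDiff₂ lam R ∘ₗ Δ) ∧
      coJacobiator (dividedDiff₂ lam R ∘ₗ Δ) = 0 ∧
      map R R ∘ₗ dividedDiff₂ lam R ∘ₗ Δ =
        dividedDiff₂ lam R ∘ₗ (dividedDiff₂ lam R ∘ₗ Δ) ∘ₗ R := by
  refine ⟨?_, ?_, ?_⟩
  · rw [← comp_assoc Δ, comm_comp_dividedDiff₂, comp_assoc, ← comp_neg, ← hanti]
  · rw [coJacobiator_dividedDiff₂_comp hR, hjacobi, comp_zero]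
  · rw [← comp_assoc Δ, map_comp_dividedDiff₂, comp_assoc, hR, comp_assoc]

end Deformation

theorem stmt1 (lam : k) (Δ : C →ₗ[k] C ⊗[k] C) (R : C →ₗ[k] C)
    (hC : IsRBLC lam Δ R) :
    IsRBLC lam
      ((lTensor C R + rTensor C R + lam • (LinearMap.id : C ⊗[k] C →ₗ[k] C ⊗[k] C)) ∘ₗ Δ)
      R :=
  stmt1_general lam Δ R hC.1 hC.2.1 hC.2.2

end
end

section
/- Let (C, Δ_C, R_C) be a λ-weighted Rota-Baxter Lie coalgebra, let (M, ρ, R_M) be a right Lie comodule of (C, Δ_C, R_C), and set Δ̃_C = (I⊗R_C + R_C⊗I + λI)Δ_C and ρ̃ = (I⊗R_C)ρ − ρR_M. Then (M, ρ̃, R_M) is a right Lie comodule of the λ-weighted Rota-Baxter Lie coalgebra (C, Δ̃_C, R_C): (I⊗Δ̃_C)ρ̃ − (ρ̃⊗I)ρ̃ + (I⊗τ)(ρ̃⊗I)ρ̃ = 0 and (R_M⊗R_C)ρ̃ = (R_M⊗I + I⊗R_C + λI)ρ̃R_M. -/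
/-!
STATEMENT 2: If `(M, ρ, R_M)` is a right Lie comodule of the `λ`-weighted Rota-Baxter
Lie coalgebra `(C, Δ_C, R_C)`, then `(M, ρ̃, R_M)` with `ρ̃ = (I⊗R_C)ρ - ρR_M` is a right
Lie comodule of `(C, Δ̃_C, R_C)`, where `Δ̃_C = (I⊗R_C + R_C⊗I + λI)Δ_C`.
-/

open TensorProduct LinearMap

section

variable {k : Type*} [Field k]
variable {C : Type*} [AddCommGroup C] [Module k C]
variable {M : Type*} [AddCommGroup M] [Module k M]

/-- Right Lie comodule condition `(I⊗Δ)ρ - (ρ⊗I)ρ + (I⊗τ)(ρ⊗I)ρ = 0`. -/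
def IsCoMod (Δ : C →ₗ[k] C ⊗[k] C) (ρ : M →ₗ[k] M ⊗[k] C) : Prop :=
  lTensor M Δ ∘ₗ ρ
    - (TensorProduct.assoc k M C C).toLinearMap ∘ₗ rTensor C ρ ∘ₗ ρ
    + lTensor M (TensorProduct.comm k C C).toLinearMap ∘ₗ
        (TensorProduct.assoc k M C C).toLinearMap ∘ₗ rTensor C ρ ∘ₗ ρ = 0

/-- `(R_M⊗R_C)ρ = (R_M⊗I + I⊗R_C + λI)ρR_M`. -/
def IsRBCoModMap (lam : k) (ρ : M →ₗ[k] M ⊗[k] C) (RC : C →ₗ[k] C) (RM : M →ₗ[k] M) : Prop :=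
  TensorProduct.map RM RC ∘ₗ ρ
    = (rTensor C RM + lTensor M RC +
        lam • (LinearMap.id : M ⊗[k] C →ₗ[k] M ⊗[k] C)) ∘ₗ ρ ∘ₗ RM

/-!
For `f : M → M ⊗ C ⊗ C` put `Φ f = (I⊗R_C⊗R_C)f - (I⊗(I⊗R_C + R_C⊗I + λI))fR_M`. Each of the two
maps `(I⊗Δ_C)ρ` and `(ρ⊗I)ρ` is carried by `Φ` to its counterpart for `Δ̃_C` and `ρ̃`, and `Φ` is
linear and commutes with `I⊗τ`. So the defect of the comodule identity for `(Δ̃_C, ρ̃)` is `Φ` of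
the defect for `(Δ_C, ρ)`. The Rota-Baxter identity is inherited by `ρ̃` because it is stable under
composing `ρ` with `R_M` on the right and with `I⊗R_C` on the left.
-/

section Coaction

variable {R : Type*} [CommSemiring R]
variable {K K' L N : Type*}
variable [AddCommMonoid K] [AddCommMonoid K'] [AddCommMonoid L] [AddCommMonoid N]
variable [Module R K] [Module R K'] [Module R L] [Module R N]

/-- The operator `I⊗P + Q⊗I + λI` on `N ⊗ L`, which appears on the right of the Rota-Baxter
identities and in the deformed cobracket `Δ̃`. -/
def rotaBaxterSum (lam : R) (P : L →ₗ[R] L) (Q : N →ₗ[R] N) : N ⊗[R] L →ₗ[R] N ⊗[R] L :=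
  lTensor N P + rTensor L Q + lam • LinearMap.id

/-- The Rota-Baxter identity `(Q⊗P)ρ = (I⊗P + Q⊗I + λI)ρQ` of weight `λ`. It is the compatibility
of a comodule with its operator `Q`, and for `N = L`, `Q = P` that of a cobracket with `P`. -/
def IsRotaBaxterCoaction (lam : R) (ρ : N →ₗ[R] N ⊗[R] L) (P : L →ₗ[R] L) (Q : N →ₗ[R] N) :
    Prop :=
  TensorProduct.map Q P ∘ₗ ρ = rotaBaxterSum lam P Q ∘ₗ ρ ∘ₗ Q

/-- The map `ρ⊗I` on `N ⊗ K`, with values rebracketed into `N ⊗ (L ⊗ K)`. -/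
def extendedCoaction (K : Type*) [AddCommMonoid K] [Module R K] (ρ : N →ₗ[R] N ⊗[R] L) :
    N ⊗[R] K →ₗ[R] N ⊗[R] (L ⊗[R] K) :=
  (TensorProduct.assoc R N L K).toLinearMap ∘ₗ rTensor K ρ

/-- The iterated coaction `(ρ⊗I)ρ`, with values rebracketed into `N ⊗ (L ⊗ L)`. -/
def iteratedCoaction (ρ : N →ₗ[R] N ⊗[R] L) : N →ₗ[R] N ⊗[R] (L ⊗[R] L) :=
  extendedCoaction L ρ ∘ₗ ρ

theorem rotaBaxterSum_comp_lTensor (lam : R) (P : L →ₗ[R] L) (Q : N →ₗ[R] N) :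
    rotaBaxterSum lam P Q ∘ₗ lTensor N P = lTensor N P ∘ₗ rotaBaxterSum lam P Q := by
  simp only [rotaBaxterSum, add_comp, comp_add, smul_comp, comp_smul, id_comp, comp_id,
    rTensor_comp_lTensor, lTensor_comp_rTensor]

theorem comm_comp_rotaBaxterSum (lam : R) (P : L →ₗ[R] L) (Q : N →ₗ[R] N) :
    (TensorProduct.comm R N L).toLinearMap ∘ₗ rotaBaxterSum lam P Q =
      rotaBaxterSum lam Q P ∘ₗ (TensorProduct.comm R N L).toLinearMap := by
  simp only [rotaBaxterSum, add_comp, comp_add, smul_comp, comp_smul, id_comp, comp_id,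
    lTensor_comp_comm, rTensor_comp_comm, add_comm]

theorem extendedCoaction_comp_lTensor (ρ : N →ₗ[R] N ⊗[R] L) (P : K →ₗ[R] K') :
    extendedCoaction K' ρ ∘ₗ lTensor N P = lTensor N (lTensor L P) ∘ₗ extendedCoaction K ρ := by
  have naturality : lTensor N (lTensor L P) ∘ₗ (TensorProduct.assoc R N L K).toLinearMap =
      (TensorProduct.assoc R N L K').toLinearMap ∘ₗ lTensor (N ⊗[R] L) P := by
    simpa only [lTensor, TensorProduct.map_id] using
      TensorProduct.map_map_comp_assoc_eq (LinearMap.id (R := R) (M := N))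
        (LinearMap.id (R := R) (M := L)) P
  rw [extendedCoaction, extendedCoaction, comp_assoc, rTensor_comp_lTensor, ← comp_assoc,
    naturality, comp_assoc, lTensor_comp_rTensor]

end Coaction

section Deformation

variable {R : Type*} [CommSemiring R]
variable {K L N : Type*} [AddCommMonoid K] [AddCommMonoid L] [AddCommGroup N]
variable [Module R K] [Module R L] [Module R N]

/-- The deformed coaction `ρ̃ = (I⊗P)ρ - ρQ`. -/
def deformedCoaction (P : L →ₗ[R] L) (Q : N →ₗ[R] N) (ρ : N →ₗ[R] N ⊗[R] L) : N →ₗ[R] N ⊗[R] L :=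
  lTensor N P ∘ₗ ρ - ρ ∘ₗ Q

theorem extendedCoaction_deformedCoaction (P : L →ₗ[R] L) (Q : N →ₗ[R] N)
    (ρ : N →ₗ[R] N ⊗[R] L) :
    extendedCoaction K (deformedCoaction P Q ρ) =
      lTensor N (rTensor K P) ∘ₗ extendedCoaction K ρ - extendedCoaction K ρ ∘ₗ rTensor K Q := by
  simp only [extendedCoaction, deformedCoaction, rTensor_sub, rTensor_comp, comp_sub,
    ← comp_assoc, lTensor_rTensor_comp_assoc]

/-- The map `(I⊗Δ)ρ - (ρ⊗I)ρ + (I⊗τ)(ρ⊗I)ρ`, which vanishes if and only if `ρ` satisfies the Lie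
comodule identity with respect to `Δ`. -/
def lieCoactionDefect (Δ : L →ₗ[R] L ⊗[R] L) (ρ : N →ₗ[R] N ⊗[R] L) :
    N →ₗ[R] N ⊗[R] (L ⊗[R] L) :=
  lTensor N Δ ∘ₗ ρ - iteratedCoaction ρ
    + lTensor N (TensorProduct.comm R L L).toLinearMap ∘ₗ iteratedCoaction ρ

/-- The linear map `Φ f = (I⊗P⊗P)f - (I⊗(I⊗P + P⊗I + λI))fQ`, through which the terms of the
Lie comodule identity change when `Δ` and `ρ` are deformed. -/
def deformationTransfer (lam : R) (P : L →ₗ[R] L) (Q : N →ₗ[R] N) :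
    (N →ₗ[R] N ⊗[R] (L ⊗[R] L)) →ₗ[R] N →ₗ[R] N ⊗[R] (L ⊗[R] L) :=
  compRight R (lTensor N (TensorProduct.map P P))
    - compRight R (lTensor N (rotaBaxterSum lam P P)) ∘ₗ lcomp R _ Q

theorem deformationTransfer_apply (lam : R) (P : L →ₗ[R] L) (Q : N →ₗ[R] N)
    (f : N →ₗ[R] N ⊗[R] (L ⊗[R] L)) :
    deformationTransfer lam P Q f = lTensor N (TensorProduct.map P P) ∘ₗ f
      - lTensor N (rotaBaxterSum lam P P) ∘ₗ f ∘ₗ Q :=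
  rfl

theorem lTensor_comm_comp_deformationTransfer (lam : R) (P : L →ₗ[R] L) (Q : N →ₗ[R] N)
    (f : N →ₗ[R] N ⊗[R] (L ⊗[R] L)) :
    lTensor N (TensorProduct.comm R L L).toLinearMap ∘ₗ deformationTransfer lam P Q f =
      deformationTransfer lam P Q (lTensor N (TensorProduct.comm R L L).toLinearMap ∘ₗ f) := by
  simp only [deformationTransfer_apply, comp_sub, ← comp_assoc, ← lTensor_comp,
    comm_comp_rotaBaxterSum, TensorProduct.map_comp_comm_eq]

variable {lam : R} {P : L →ₗ[R] L} {Q : N →ₗ[R] N}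

theorem IsRotaBaxterCoaction.lTensor_comp_deformedCoaction {Δ : L →ₗ[R] L ⊗[R] L}
    (hΔ : IsRotaBaxterCoaction lam Δ P P) (Q : N →ₗ[R] N) (ρ : N →ₗ[R] N ⊗[R] L) :
    lTensor N (rotaBaxterSum lam P P ∘ₗ Δ) ∘ₗ deformedCoaction P Q ρ =
      deformationTransfer lam P Q (lTensor N Δ ∘ₗ ρ) := by
  have sum_comp_lTensor : lTensor N (rotaBaxterSum lam P P ∘ₗ Δ) ∘ₗ lTensor N P =
      lTensor N (TensorProduct.map P P) ∘ₗ lTensor N Δ := by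
    rw [← lTensor_comp, ← lTensor_comp, comp_assoc, ← hΔ]
  rw [deformedCoaction, deformationTransfer_apply, comp_sub, ← comp_assoc, sum_comp_lTensor,
    lTensor_comp]
  simp only [comp_assoc]

theorem IsRotaBaxterCoaction.rTensor_comp_deformedCoaction {ρ : N →ₗ[R] N ⊗[R] L}
    (hρ : IsRotaBaxterCoaction lam ρ P Q) :
    rTensor L Q ∘ₗ deformedCoaction P Q ρ = lTensor N P ∘ₗ ρ ∘ₗ Q + lam • ρ ∘ₗ Q := by
  rw [deformedCoaction, comp_sub, ← comp_assoc, rTensor_comp_lTensor, hρ, rotaBaxterSum]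
  simp only [add_comp, smul_comp, id_comp]
  abel

theorem IsRotaBaxterCoaction.iteratedCoaction_deformedCoaction {ρ : N →ₗ[R] N ⊗[R] L}
    (hρ : IsRotaBaxterCoaction lam ρ P Q) :
    iteratedCoaction (deformedCoaction P Q ρ) =
      deformationTransfer lam P Q (iteratedCoaction ρ) := by
  let E := extendedCoaction L ρ
  let P₁ := lTensor N (rTensor L P)
  let P₂ := lTensor N (lTensor L P)
  have slide : E ∘ₗ lTensor N P = P₂ ∘ₗ E := extendedCoaction_comp_lTensor ρ P
  have map_eq : lTensor N (TensorProduct.map P P) = P₁ ∘ₗ P₂ := by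
    rw [← lTensor_comp, rTensor_comp_lTensor]
  have sum_eq : lTensor N (rotaBaxterSum lam P P) = P₂ + P₁ + lam • LinearMap.id := by
    rw [rotaBaxterSum, lTensor_add, lTensor_add, lTensor_smul, lTensor_id]
  calc iteratedCoaction (deformedCoaction P Q ρ)
      = P₁ ∘ₗ E ∘ₗ deformedCoaction P Q ρ - E ∘ₗ rTensor L Q ∘ₗ deformedCoaction P Q ρ := by
        rw [iteratedCoaction, extendedCoaction_deformedCoaction, sub_comp, comp_assoc, comp_assoc]
    _ = P₁ ∘ₗ (P₂ ∘ₗ E ∘ₗ ρ - E ∘ₗ ρ ∘ₗ Q) - (P₂ ∘ₗ E ∘ₗ ρ ∘ₗ Q + lam • E ∘ₗ ρ ∘ₗ Q) := by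
        rw [hρ.rTensor_comp_deformedCoaction, deformedCoaction, comp_sub, comp_add, comp_smul,
          ← comp_assoc _ (lTensor N P), ← comp_assoc _ (lTensor N P), slide, comp_assoc,
          comp_assoc]
    _ = (P₁ ∘ₗ P₂) ∘ₗ (E ∘ₗ ρ) - (P₂ + P₁ + lam • LinearMap.id) ∘ₗ (E ∘ₗ ρ) ∘ₗ Q := by
        simp only [comp_sub, add_comp, smul_comp, id_comp, comp_assoc]
        abel
    _ = deformationTransfer lam P Q (iteratedCoaction ρ) := by
        rw [deformationTransfer_apply, map_eq, sum_eq]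
        rfl

theorem lieCoactionDefect_deformedCoaction {Δ : L →ₗ[R] L ⊗[R] L} {ρ : N →ₗ[R] N ⊗[R] L}
    (hΔ : IsRotaBaxterCoaction lam Δ P P) (hρ : IsRotaBaxterCoaction lam ρ P Q) :
    lieCoactionDefect (rotaBaxterSum lam P P ∘ₗ Δ) (deformedCoaction P Q ρ) =
      deformationTransfer lam P Q (lieCoactionDefect Δ ρ) := by
  simp only [lieCoactionDefect, map_add, map_sub, hΔ.lTensor_comp_deformedCoaction,
    hρ.iteratedCoaction_deformedCoaction, lTensor_comm_comp_deformationTransfer]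

theorem IsRotaBaxterCoaction.deformedCoaction {ρ : N →ₗ[R] N ⊗[R] L}
    (hρ : IsRotaBaxterCoaction lam ρ P Q) :
    IsRotaBaxterCoaction lam (deformedCoaction P Q ρ) P Q := by
  have map_comm : TensorProduct.map Q P ∘ₗ lTensor N P = lTensor N P ∘ₗ TensorProduct.map Q P := by
    rw [map_comp_lTensor, lTensor_comp_map]
  calc TensorProduct.map Q P ∘ₗ (lTensor N P ∘ₗ ρ - ρ ∘ₗ Q)
      = lTensor N P ∘ₗ (TensorProduct.map Q P ∘ₗ ρ) - (TensorProduct.map Q P ∘ₗ ρ) ∘ₗ Q := by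
        rw [comp_sub, ← comp_assoc, map_comm, comp_assoc, comp_assoc]
    _ = lTensor N P ∘ₗ (rotaBaxterSum lam P Q ∘ₗ ρ ∘ₗ Q)
          - (rotaBaxterSum lam P Q ∘ₗ ρ ∘ₗ Q) ∘ₗ Q := by
        rw [hρ]
    _ = rotaBaxterSum lam P Q ∘ₗ (lTensor N P ∘ₗ ρ - ρ ∘ₗ Q) ∘ₗ Q := by
        rw [sub_comp, comp_sub, ← comp_assoc, ← rotaBaxterSum_comp_lTensor]
        simp only [comp_assoc]

theorem stmt2_general {Δ : L →ₗ[R] L ⊗[R] L} {ρ : N →ₗ[R] N ⊗[R] L}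
    (hΔ : IsRotaBaxterCoaction lam Δ P P) (hLie : lieCoactionDefect Δ ρ = 0)
    (hρ : IsRotaBaxterCoaction lam ρ P Q) :
    lieCoactionDefect (rotaBaxterSum lam P P ∘ₗ Δ) (deformedCoaction P Q ρ) = 0 ∧
      IsRotaBaxterCoaction lam (deformedCoaction P Q ρ) P Q :=
  ⟨by rw [lieCoactionDefect_deformedCoaction hΔ hρ, hLie, map_zero], hρ.deformedCoaction⟩

end Deformation

theorem isRBCoModMap_iff_isRotaBaxterCoaction {lam : k} {ρ : M →ₗ[k] M ⊗[k] C} {RC : C →ₗ[k] C}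
    {RM : M →ₗ[k] M} : IsRBCoModMap lam ρ RC RM ↔ IsRotaBaxterCoaction lam ρ RC RM := by
  rw [IsRBCoModMap, IsRotaBaxterCoaction, rotaBaxterSum, add_comm (rTensor C RM)]

theorem stmt2 (lam : k) (Δ : C →ₗ[k] C ⊗[k] C) (RC : C →ₗ[k] C)
    (ρ : M →ₗ[k] M ⊗[k] C) (RM : M →ₗ[k] M)
    (hC : IsRBLC lam Δ RC) (hM : IsCoMod Δ ρ ∧ IsRBCoModMap lam ρ RC RM) :
    IsCoMod ((lTensor C RC + rTensor C RC
        + lam • (LinearMap.id : C ⊗[k] C →ₗ[k] C ⊗[k] C)) ∘ₗ Δ)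
      (lTensor M RC ∘ₗ ρ - ρ ∘ₗ RM) ∧
    IsRBCoModMap lam (lTensor M RC ∘ₗ ρ - ρ ∘ₗ RM) RC RM := by
  rw [isRBCoModMap_iff_isRotaBaxterCoaction] at hM ⊢
  exact stmt2_general hC.2.2 hM.1 hM.2

end
end

section
/- Let 0 → C →f E →g M → 0 be a non-abelian extension of λ-weighted Rota-Baxter Lie coalgebras with retraction t. Then the induced maps h_t, ρ_t, φ_t are well defined (independent of the choice of preimage under g), and the triple (h_t, ρ_t, φ_t) is a non-abelian 2-cocycle on (C, Δ_C, R_C) with values in (M, Δ_M, R_M). -/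
open TensorProduct LinearMap

section

variable {k : Type*} [Field k]
variable {C : Type*} [AddCommGroup C] [Module k C]
variable {M : Type*} [AddCommGroup M] [Module k M]
variable {E : Type*} [AddCommGroup E] [Module k E]

/-- Homomorphism of `λ`-weighted Rota-Baxter Lie coalgebras:
`(θ⊗θ)Δ_C = Δ_E θ` and `R_E θ = θ R_C`. -/
def IsHom (ΔC : C →ₗ[k] C ⊗[k] C) (RC : C →ₗ[k] C)
    (ΔE : E →ₗ[k] E ⊗[k] E) (RE : E →ₗ[k] E) (θ : C →ₗ[k] E) : Prop :=
  TensorProduct.map θ θ ∘ₗ ΔC = ΔE ∘ₗ θ ∧ RE ∘ₗ θ = θ ∘ₗ RC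

/-- Non-abelian 2-cocycle `(h, ρ, φ)` on `(C, Δ_C, R_C)` with values in `(M, Δ_M, R_M)`. -/
def NA2Cocycle (lam : k) (ΔC : C →ₗ[k] C ⊗[k] C) (RC : C →ₗ[k] C)
    (ΔM : M →ₗ[k] M ⊗[k] M) (RM : M →ₗ[k] M)
    (h : M →ₗ[k] C ⊗[k] C) (ρ : M →ₗ[k] M ⊗[k] C) (φ : M →ₗ[k] C) : Prop :=
  -- (1)  τh + h = 0
  ((TensorProduct.comm k C C).toLinearMap ∘ₗ h + h = 0) ∧
  -- (2)  (I⊗Δ_C)h − (Δ_C⊗I)h + (I⊗τ)(Δ_C⊗I)h = (h⊗I)ρ + (I⊗h)τρ − (I⊗τ)(h⊗I)ρ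
  (lTensor C ΔC ∘ₗ h
      - (TensorProduct.assoc k C C C).toLinearMap ∘ₗ rTensor C ΔC ∘ₗ h
      + lTensor C (TensorProduct.comm k C C).toLinearMap ∘ₗ
          (TensorProduct.assoc k C C C).toLinearMap ∘ₗ rTensor C ΔC ∘ₗ h
    = (TensorProduct.assoc k C C C).toLinearMap ∘ₗ
        TensorProduct.map h (LinearMap.id : C →ₗ[k] C) ∘ₗ ρ
      + lTensor C h ∘ₗ (TensorProduct.comm k M C).toLinearMap ∘ₗ ρ
      - lTensor C (TensorProduct.comm k C C).toLinearMap ∘ₗ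
          (TensorProduct.assoc k C C C).toLinearMap ∘ₗ
          TensorProduct.map h (LinearMap.id : C →ₗ[k] C) ∘ₗ ρ) ∧
  -- (3)  (I⊗Δ_C)ρ + (I⊗h)Δ_M = (ρ⊗I)ρ − (I⊗τ)(ρ⊗I)ρ
  (lTensor M ΔC ∘ₗ ρ + lTensor M h ∘ₗ ΔM
    = (TensorProduct.assoc k M C C).toLinearMap ∘ₗ rTensor C ρ ∘ₗ ρ
      - lTensor M (TensorProduct.comm k C C).toLinearMap ∘ₗ
          (TensorProduct.assoc k M C C).toLinearMap ∘ₗ rTensor C ρ ∘ₗ ρ) ∧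
  -- (4)  (Δ_M⊗I)ρ = (I⊗τ)(ρ⊗I)Δ_M + (I⊗ρ)Δ_M
  ((TensorProduct.assoc k M M C).toLinearMap ∘ₗ rTensor C ΔM ∘ₗ ρ
    = lTensor M (TensorProduct.comm k C M).toLinearMap ∘ₗ
        (TensorProduct.assoc k M C M).toLinearMap ∘ₗ rTensor M ρ ∘ₗ ΔM
      + lTensor M ρ ∘ₗ ΔM) ∧
  -- (5)
  (TensorProduct.map φ RC ∘ₗ ρ
      - TensorProduct.map RC φ ∘ₗ (TensorProduct.comm k M C).toLinearMap ∘ₗ ρ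
      - TensorProduct.map φ (LinearMap.id : C →ₗ[k] C) ∘ₗ ρ ∘ₗ RM
      + lTensor C φ ∘ₗ (TensorProduct.comm k M C).toLinearMap ∘ₗ ρ ∘ₗ RM
      + TensorProduct.map φ φ ∘ₗ ΔM
      - (lTensor C RC + rTensor C RC
          + lam • (LinearMap.id : C ⊗[k] C →ₗ[k] C ⊗[k] C)) ∘ₗ ΔC ∘ₗ φ
    = (rTensor C RC + lTensor C RC
        + lam • (LinearMap.id : C ⊗[k] C →ₗ[k] C ⊗[k] C)) ∘ₗ h ∘ₗ RM
      - TensorProduct.map RC RC ∘ₗ h) ∧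
  -- (6)  (R_M⊗φ)Δ_M + (R_M⊗R_C)ρ = (I⊗φ)Δ_M R_M + (I⊗R_C + R_M⊗I + λ)ρR_M
  (TensorProduct.map RM φ ∘ₗ ΔM + TensorProduct.map RM RC ∘ₗ ρ
    = lTensor M φ ∘ₗ ΔM ∘ₗ RM
      + (lTensor M RC + rTensor C RM
          + lam • (LinearMap.id : M ⊗[k] C →ₗ[k] M ⊗[k] C)) ∘ₗ ρ ∘ₗ RM)

/-- The cobracket `Δ_{(h,ρ)}` on `C ⊕ M`. -/
noncomputable def prodCobra (ΔC : C →ₗ[k] C ⊗[k] C) (ΔM : M →ₗ[k] M ⊗[k] M)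
    (h : M →ₗ[k] C ⊗[k] C) (ρ : M →ₗ[k] M ⊗[k] C) :
    (C × M) →ₗ[k] (C × M) ⊗[k] (C × M) :=
  TensorProduct.map (LinearMap.inl k C M) (LinearMap.inl k C M) ∘ₗ
      (ΔC ∘ₗ LinearMap.fst k C M + h ∘ₗ LinearMap.snd k C M)
    + TensorProduct.map (LinearMap.inr k C M) (LinearMap.inr k C M) ∘ₗ ΔM ∘ₗ LinearMap.snd k C M
    + TensorProduct.map (LinearMap.inr k C M) (LinearMap.inl k C M) ∘ₗ ρ ∘ₗ LinearMap.snd k C M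
    - TensorProduct.map (LinearMap.inl k C M) (LinearMap.inr k C M) ∘ₗ
        (TensorProduct.comm k M C).toLinearMap ∘ₗ ρ ∘ₗ LinearMap.snd k C M

/-- The operator `R_φ` on `C ⊕ M`. -/
def prodRB (RC : C →ₗ[k] C) (RM : M →ₗ[k] M) (φ : M →ₗ[k] C) :
    (C × M) →ₗ[k] (C × M) :=
  LinearMap.inl k C M ∘ₗ (RC ∘ₗ LinearMap.fst k C M + φ ∘ₗ LinearMap.snd k C M)
    + LinearMap.inr k C M ∘ₗ RM ∘ₗ LinearMap.snd k C M

/-- `(α,β)` is extensible with respect to the non-abelian extension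
`0 → C →f E →g M → 0`. -/
def Extensible (ΔE : E →ₗ[k] E ⊗[k] E) (RE : E →ₗ[k] E)
    (f : C →ₗ[k] E) (g : E →ₗ[k] M) (α : C →ₗ[k] C) (β : M →ₗ[k] M) : Prop :=
  ∃ γ : E →ₗ[k] E, IsHom ΔE RE ΔE RE γ ∧ Function.Bijective γ ∧
    Submodule.map γ (LinearMap.range f) = LinearMap.range f ∧
    γ ∘ₗ f = f ∘ₗ α ∧ g ∘ₗ γ = β ∘ₗ g

/-- `(h', ρ', φ')` differs from `(h, ρ, φ)` by the equivalence move associated to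
the linear map `s : M → C`. -/
def EquivVia (ΔC : C →ₗ[k] C ⊗[k] C) (RC : C →ₗ[k] C)
    (ΔM : M →ₗ[k] M ⊗[k] M) (RM : M →ₗ[k] M) (s : M →ₗ[k] C)
    (h : M →ₗ[k] C ⊗[k] C) (ρ : M →ₗ[k] M ⊗[k] C) (φ : M →ₗ[k] C)
    (h' : M →ₗ[k] C ⊗[k] C) (ρ' : M →ₗ[k] M ⊗[k] C) (φ' : M →ₗ[k] C) : Prop :=
  h' - h = TensorProduct.map s (LinearMap.id : C →ₗ[k] C) ∘ₗ ρ
      - (TensorProduct.comm k C C).toLinearMap ∘ₗ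
          TensorProduct.map s (LinearMap.id : C →ₗ[k] C) ∘ₗ ρ
      + TensorProduct.map s s ∘ₗ ΔM - ΔC ∘ₗ s ∧
  ρ' - ρ = lTensor M s ∘ₗ ΔM ∧
  φ' - φ = s ∘ₗ RM - RC ∘ₗ s

/-- Two non-abelian 2-cocycles are equivalent. -/
def CocEquiv (ΔC : C →ₗ[k] C ⊗[k] C) (RC : C →ₗ[k] C)
    (ΔM : M →ₗ[k] M ⊗[k] M) (RM : M →ₗ[k] M)
    (h : M →ₗ[k] C ⊗[k] C) (ρ : M →ₗ[k] M ⊗[k] C) (φ : M →ₗ[k] C)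
    (h' : M →ₗ[k] C ⊗[k] C) (ρ' : M →ₗ[k] M ⊗[k] C) (φ' : M →ₗ[k] C) : Prop :=
  ∃ s : M →ₗ[k] C, EquivVia ΔC RC ΔM RM s h ρ φ h' ρ' φ'

/-!
The three maps on `E` that define `h_t`, `ρ_t`, `φ_t` vanish on the image of `f`, because `t f = I`
and `g f = 0`; hence they depend only on the value of `g`.

Composing the axioms of `E` with tensor products of arbitrary linear maps out of `E` gives
"polarised" identities. Two maps on `M` agree as soon as they agree after composition with the
surjection `g`, and along `g` each cocycle condition is a polarised identity: antisymmetry gives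
(1), the co-Jacobi identity tested on `(t, t, t)`, `(g, t, t)`, `(g, g, t)` gives (2), (3), (4), and
the Rota-Baxter identity tested on `(t, t)`, `(g, t)` gives (5), (6). In (1), (2) and (5) the terms
that involve only the structure of `C` cancel by the corresponding axiom of `C`, evaluated at `t e`.
-/

section TensorMaps

variable {R A A' B B' : Type*} [CommRing R] [AddCommMonoid A] [Module R A]
  [AddCommMonoid A'] [Module R A'] [AddCommGroup B] [Module R B] [AddCommGroup B'] [Module R B']

theorem tensorMap_sub_left (u v : A →ₗ[R] B) (w : A' →ₗ[R] B') :
    TensorProduct.map (u - v) w = TensorProduct.map u w - TensorProduct.map v w :=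
  map_sub₂ (mapBilinear (.id R) A A' B B') u v w

theorem tensorMap_sub_right (u : A →ₗ[R] B) (v w : A' →ₗ[R] B') :
    TensorProduct.map u (v - w) = TensorProduct.map u v - TensorProduct.map u w :=
  map_sub (mapBilinear (.id R) A A' B B' u) v w

end TensorMaps

theorem map_map_lTensor_comm {R P P' A A' B B' : Type*} [CommSemiring R]
    [AddCommMonoid P] [Module R P] [AddCommMonoid P'] [Module R P']
    [AddCommMonoid A] [Module R A] [AddCommMonoid A'] [Module R A']
    [AddCommMonoid B] [Module R B] [AddCommMonoid B'] [Module R B']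
    (u : P →ₗ[R] P') (v : A →ₗ[R] A') (w : B →ₗ[R] B') (x : P ⊗[R] (B ⊗[R] A)) :
    TensorProduct.map u (TensorProduct.map v w)
        (lTensor P (TensorProduct.comm R B A).toLinearMap x)
      = lTensor P' (TensorProduct.comm R B' A').toLinearMap
          (TensorProduct.map u (TensorProduct.map w v) x) := by
  rw [map_lTensor, lTensor_map, TensorProduct.map_comp_comm_eq]

theorem factorsThrough_of_comp_eq_zero {R A B D F : Type*} [Ring R]
    [AddCommMonoid A] [Module R A] [AddCommGroup B] [Module R B]
    [AddCommGroup D] [Module R D] [AddCommGroup F] [Module R F]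
    {f : A →ₗ[R] B} {g : B →ₗ[R] D} {u : B →ₗ[R] F}
    (hfg : ker g ≤ range f) (huf : u ∘ₗ f = 0) : Function.FactorsThrough u g := fun _ _ h ↦
  sub_mem_ker_iff.1 (range_le_ker_iff.2 huf (hfg (sub_mem_ker_iff.2 h)))

section PolarisedIdentities

variable {A B D : Type*} [AddCommGroup A] [Module k A] [AddCommGroup B] [Module k B]
  [AddCommGroup D] [Module k D] {Δ : C →ₗ[k] C ⊗[k] C}

theorem CoAnti.comm_apply (hΔ : CoAnti Δ) (x : C) : TensorProduct.comm k C C (Δ x) = -Δ x :=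
  neg_eq_iff_eq_neg.1 (LinearMap.congr_fun hΔ x).symm

theorem CoAnti.comm_map_apply (hΔ : CoAnti Δ) (u : C →ₗ[k] A) (v : C →ₗ[k] B) (x : C) :
    TensorProduct.comm k A B (TensorProduct.map u v (Δ x)) = -TensorProduct.map v u (Δ x) := by
  rw [← TensorProduct.map_comm, hΔ.comm_apply, map_neg]

theorem CoJacobi.map_apply (hΔ : CoJacobi Δ)
    (u : C →ₗ[k] A) (v : C →ₗ[k] B) (w : C →ₗ[k] D) (x : C) :
    TensorProduct.map u (TensorProduct.map v w ∘ₗ Δ) (Δ x)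
      - TensorProduct.assoc k A B D (TensorProduct.map (TensorProduct.map u v ∘ₗ Δ) w (Δ x))
      + lTensor A (TensorProduct.comm k D B).toLinearMap
          (TensorProduct.assoc k A D B
            (TensorProduct.map (TensorProduct.map u w ∘ₗ Δ) v (Δ x))) = 0 := by
  have jacobi := congrArg (TensorProduct.map u (TensorProduct.map v w)) (LinearMap.congr_fun hΔ x)
  simp only [LinearMap.add_apply, LinearMap.sub_apply, LinearMap.comp_apply, LinearEquiv.coe_coe,
    LinearMap.zero_apply, map_add, map_sub, map_zero, map_map_lTensor_comm,
    TensorProduct.map_map_assoc, map_rTensor] at jacobi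
  rwa [map_lTensor] at jacobi

theorem IsRBO.map_apply {lam : k} {R : C →ₗ[k] C} (hR : IsRBO lam Δ R)
    (u : C →ₗ[k] A) (v : C →ₗ[k] B) (x : C) :
    TensorProduct.map (u ∘ₗ R) (v ∘ₗ R) (Δ x)
      = TensorProduct.map u (v ∘ₗ R) (Δ (R x)) + TensorProduct.map (u ∘ₗ R) v (Δ (R x))
        + lam • TensorProduct.map u v (Δ (R x)) := by
  have rotaBaxter := congrArg (TensorProduct.map u v) (LinearMap.congr_fun hR x)
  simpa only [LinearMap.add_apply, LinearMap.comp_apply, LinearMap.smul_apply, LinearMap.id_apply,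
    map_add, map_smul, map_lTensor, map_rTensor, TensorProduct.map_map] using rotaBaxter

end PolarisedIdentities

/-- The failure `(t ⊗ t)Δ_E - Δ_C t` of a linear map `t : E → C` to respect cobrackets. For a
retraction `t` of an extension it factors through `g` as `h_t`. -/
def cobracketDefect (ΔC : C →ₗ[k] C ⊗[k] C) (ΔE : E →ₗ[k] E ⊗[k] E) (t : E →ₗ[k] C) :
    E →ₗ[k] C ⊗[k] C :=
  TensorProduct.map t t ∘ₗ ΔE - ΔC ∘ₗ t

/-- The failure `t R_E - R_C t` of a linear map `t : E → C` to commute with the operators. For a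
retraction `t` of an extension it factors through `g` as `φ_t`. -/
def operatorDefect (RC : C →ₗ[k] C) (RE : E →ₗ[k] E) (t : E →ₗ[k] C) : E →ₗ[k] C :=
  t ∘ₗ RE - RC ∘ₗ t

section Extension

variable {lam : k} {ΔC : C →ₗ[k] C ⊗[k] C} {RC : C →ₗ[k] C} {ΔM : M →ₗ[k] M ⊗[k] M}
  {RM : M →ₗ[k] M} {ΔE : E →ₗ[k] E ⊗[k] E} {RE : E →ₗ[k] E} {f : C →ₗ[k] E} {g : E →ₗ[k] M}
  {t : E →ₗ[k] C} {h : M →ₗ[k] C ⊗[k] C} {ρ : M →ₗ[k] M ⊗[k] C} {φ : M →ₗ[k] C}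

theorem cobracketDefect_comp_eq_zero (hΔf : TensorProduct.map f f ∘ₗ ΔC = ΔE ∘ₗ f)
    (ht : t ∘ₗ f = LinearMap.id) : cobracketDefect ΔC ΔE t ∘ₗ f = 0 := by
  rw [cobracketDefect, LinearMap.sub_comp, LinearMap.comp_assoc, LinearMap.comp_assoc, ← hΔf,
    ← LinearMap.comp_assoc, ← TensorProduct.map_comp, ht, TensorProduct.map_id, LinearMap.id_comp,
    LinearMap.comp_id, sub_self]

theorem map_comp_cobracket_comp_eq_zero (hΔf : TensorProduct.map f f ∘ₗ ΔC = ΔE ∘ₗ f)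
    (hgf : g ∘ₗ f = 0) : (TensorProduct.map g t ∘ₗ ΔE) ∘ₗ f = 0 := by
  rw [LinearMap.comp_assoc, ← hΔf, ← LinearMap.comp_assoc, ← TensorProduct.map_comp, hgf,
    TensorProduct.map_zero_left, LinearMap.zero_comp]

theorem operatorDefect_comp_eq_zero (hRf : RE ∘ₗ f = f ∘ₗ RC) (ht : t ∘ₗ f = LinearMap.id) :
    operatorDefect RC RE t ∘ₗ f = 0 := by
  rw [operatorDefect, LinearMap.sub_comp, LinearMap.comp_assoc, LinearMap.comp_assoc, hRf,
    ← LinearMap.comp_assoc, ht, LinearMap.id_comp, LinearMap.comp_id, sub_self]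

theorem inducedCocycle_antisymm (hτC : CoAnti ΔC) (hτE : CoAnti ΔE)
    (hg : Function.Surjective g) (hh : h ∘ₗ g = cobracketDefect ΔC ΔE t) :
    (TensorProduct.comm k C C).toLinearMap ∘ₗ h + h = 0 := by
  refine LinearMap.ext (hg.forall.2 fun e ↦ ?_)
  have h_apply : h (g e) = TensorProduct.map t t (ΔE e) - ΔC (t e) := LinearMap.congr_fun hh e
  simp only [LinearMap.add_apply, LinearMap.comp_apply, LinearEquiv.coe_coe, LinearMap.zero_apply,
    h_apply, map_sub, hτE.comm_map_apply, hτC.comm_apply]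
  abel

theorem inducedCocycle_coJacobi (hΔC : CoJacobi ΔC) (hΔE : CoJacobi ΔE) (hτE : CoAnti ΔE)
    (hg : Function.Surjective g) (hh : h ∘ₗ g = cobracketDefect ΔC ΔE t)
    (hρ : ρ ∘ₗ g = TensorProduct.map g t ∘ₗ ΔE) :
    lTensor C ΔC ∘ₗ h
        - (TensorProduct.assoc k C C C).toLinearMap ∘ₗ rTensor C ΔC ∘ₗ h
        + lTensor C (TensorProduct.comm k C C).toLinearMap ∘ₗ
            (TensorProduct.assoc k C C C).toLinearMap ∘ₗ rTensor C ΔC ∘ₗ h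
      = (TensorProduct.assoc k C C C).toLinearMap ∘ₗ
          TensorProduct.map h (LinearMap.id : C →ₗ[k] C) ∘ₗ ρ
        + lTensor C h ∘ₗ (TensorProduct.comm k M C).toLinearMap ∘ₗ ρ
        - lTensor C (TensorProduct.comm k C C).toLinearMap ∘ₗ
            (TensorProduct.assoc k C C C).toLinearMap ∘ₗ
            TensorProduct.map h (LinearMap.id : C →ₗ[k] C) ∘ₗ ρ := by
  refine LinearMap.ext (hg.forall.2 fun e ↦ ?_)
  have h_apply : h (g e) = TensorProduct.map t t (ΔE e) - ΔC (t e) := LinearMap.congr_fun hh e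
  have ρ_apply : ρ (g e) = TensorProduct.map g t (ΔE e) := LinearMap.congr_fun hρ e
  have jacobiC := LinearMap.congr_fun hΔC (t e)
  have jacobiE := hΔE.map_apply t t t e
  simp only [LinearMap.add_apply, LinearMap.sub_apply, LinearMap.comp_apply, LinearEquiv.coe_coe,
    LinearMap.zero_apply] at jacobiC
  simp only [LinearMap.add_apply, LinearMap.sub_apply, LinearMap.comp_apply, LinearEquiv.coe_coe,
    h_apply, ρ_apply, map_sub, map_neg, lTensor_map, rTensor_map, TensorProduct.map_map,
    LinearMap.id_comp, hτE.comm_map_apply, hh, cobracketDefect, tensorMap_sub_left,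
    tensorMap_sub_right]
  linear_combination (norm := module) jacobiE - jacobiC

theorem inducedCocycle_coaction (hΔE : CoJacobi ΔE) (hΔg : TensorProduct.map g g ∘ₗ ΔE = ΔM ∘ₗ g)
    (hg : Function.Surjective g) (hh : h ∘ₗ g = cobracketDefect ΔC ΔE t)
    (hρ : ρ ∘ₗ g = TensorProduct.map g t ∘ₗ ΔE) :
    lTensor M ΔC ∘ₗ ρ + lTensor M h ∘ₗ ΔM
      = (TensorProduct.assoc k M C C).toLinearMap ∘ₗ rTensor C ρ ∘ₗ ρ
        - lTensor M (TensorProduct.comm k C C).toLinearMap ∘ₗ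
            (TensorProduct.assoc k M C C).toLinearMap ∘ₗ rTensor C ρ ∘ₗ ρ := by
  refine LinearMap.ext (hg.forall.2 fun e ↦ ?_)
  have ρ_apply : ρ (g e) = TensorProduct.map g t (ΔE e) := LinearMap.congr_fun hρ e
  have ΔM_apply : ΔM (g e) = TensorProduct.map g g (ΔE e) := (LinearMap.congr_fun hΔg e).symm
  have jacobiE := hΔE.map_apply g t t e
  simp only [LinearMap.add_apply, LinearMap.sub_apply, LinearMap.comp_apply, LinearEquiv.coe_coe,
    ρ_apply, ΔM_apply, lTensor_map, rTensor_map, hh, hρ, cobracketDefect, tensorMap_sub_right]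
  linear_combination (norm := module) jacobiE

theorem inducedCocycle_coderivation (hΔE : CoJacobi ΔE)
    (hΔg : TensorProduct.map g g ∘ₗ ΔE = ΔM ∘ₗ g) (hg : Function.Surjective g)
    (hρ : ρ ∘ₗ g = TensorProduct.map g t ∘ₗ ΔE) :
    (TensorProduct.assoc k M M C).toLinearMap ∘ₗ rTensor C ΔM ∘ₗ ρ
      = lTensor M (TensorProduct.comm k C M).toLinearMap ∘ₗ
          (TensorProduct.assoc k M C M).toLinearMap ∘ₗ rTensor M ρ ∘ₗ ΔM
        + lTensor M ρ ∘ₗ ΔM := by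
  refine LinearMap.ext (hg.forall.2 fun e ↦ ?_)
  have ρ_apply : ρ (g e) = TensorProduct.map g t (ΔE e) := LinearMap.congr_fun hρ e
  have ΔM_apply : ΔM (g e) = TensorProduct.map g g (ΔE e) := (LinearMap.congr_fun hΔg e).symm
  have jacobiE := hΔE.map_apply g g t e
  simp only [LinearMap.add_apply, LinearMap.comp_apply, LinearEquiv.coe_coe,
    ρ_apply, ΔM_apply, lTensor_map, rTensor_map, hρ, ← hΔg]
  linear_combination (norm := module) -jacobiE

theorem inducedCocycle_rotaBaxter_cobracket (hRC : IsRBO lam ΔC RC) (hRE : IsRBO lam ΔE RE)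
    (hτE : CoAnti ΔE) (hΔg : TensorProduct.map g g ∘ₗ ΔE = ΔM ∘ₗ g) (hRg : RM ∘ₗ g = g ∘ₗ RE)
    (hg : Function.Surjective g) (hh : h ∘ₗ g = cobracketDefect ΔC ΔE t)
    (hρ : ρ ∘ₗ g = TensorProduct.map g t ∘ₗ ΔE) (hφ : φ ∘ₗ g = operatorDefect RC RE t) :
    TensorProduct.map φ RC ∘ₗ ρ
        - TensorProduct.map RC φ ∘ₗ (TensorProduct.comm k M C).toLinearMap ∘ₗ ρ
        - TensorProduct.map φ (LinearMap.id : C →ₗ[k] C) ∘ₗ ρ ∘ₗ RM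
        + lTensor C φ ∘ₗ (TensorProduct.comm k M C).toLinearMap ∘ₗ ρ ∘ₗ RM
        + TensorProduct.map φ φ ∘ₗ ΔM
        - (lTensor C RC + rTensor C RC
            + lam • (LinearMap.id : C ⊗[k] C →ₗ[k] C ⊗[k] C)) ∘ₗ ΔC ∘ₗ φ
      = (rTensor C RC + lTensor C RC
          + lam • (LinearMap.id : C ⊗[k] C →ₗ[k] C ⊗[k] C)) ∘ₗ h ∘ₗ RM
        - TensorProduct.map RC RC ∘ₗ h := by
  refine LinearMap.ext (hg.forall.2 fun e ↦ ?_)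
  have h_apply (x) : h (g x) = TensorProduct.map t t (ΔE x) - ΔC (t x) := LinearMap.congr_fun hh x
  have ρ_apply (x) : ρ (g x) = TensorProduct.map g t (ΔE x) := LinearMap.congr_fun hρ x
  have φ_apply : φ (g e) = t (RE e) - RC (t e) := LinearMap.congr_fun hφ e
  have ΔM_apply : ΔM (g e) = TensorProduct.map g g (ΔE e) := (LinearMap.congr_fun hΔg e).symm
  have RM_apply : RM (g e) = g (RE e) := LinearMap.congr_fun hRg e
  have rotaBaxterC := LinearMap.congr_fun hRC (t e)
  have rotaBaxterE := hRE.map_apply t t e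
  simp only [LinearMap.add_apply, LinearMap.comp_apply, LinearMap.smul_apply,
    LinearMap.id_apply] at rotaBaxterC
  simp only [LinearMap.add_apply, LinearMap.sub_apply, LinearMap.comp_apply, LinearMap.smul_apply,
    LinearMap.id_apply, LinearEquiv.coe_coe, h_apply, ρ_apply, φ_apply, ΔM_apply, RM_apply,
    map_sub, map_neg, hτE.comm_map_apply, lTensor_map, rTensor_map, TensorProduct.map_map,
    LinearMap.id_comp, hφ, operatorDefect, tensorMap_sub_left, tensorMap_sub_right]
  linear_combination (norm := module) rotaBaxterE - rotaBaxterC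

theorem inducedCocycle_rotaBaxter_coaction (hRE : IsRBO lam ΔE RE)
    (hΔg : TensorProduct.map g g ∘ₗ ΔE = ΔM ∘ₗ g) (hRg : RM ∘ₗ g = g ∘ₗ RE)
    (hg : Function.Surjective g) (hρ : ρ ∘ₗ g = TensorProduct.map g t ∘ₗ ΔE)
    (hφ : φ ∘ₗ g = operatorDefect RC RE t) :
    TensorProduct.map RM φ ∘ₗ ΔM + TensorProduct.map RM RC ∘ₗ ρ
      = lTensor M φ ∘ₗ ΔM ∘ₗ RM
        + (lTensor M RC + rTensor C RM
            + lam • (LinearMap.id : M ⊗[k] C →ₗ[k] M ⊗[k] C)) ∘ₗ ρ ∘ₗ RM := by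
  refine LinearMap.ext (hg.forall.2 fun e ↦ ?_)
  have ρ_apply (x) : ρ (g x) = TensorProduct.map g t (ΔE x) := LinearMap.congr_fun hρ x
  have ΔM_apply (x) : ΔM (g x) = TensorProduct.map g g (ΔE x) := (LinearMap.congr_fun hΔg x).symm
  have RM_apply : RM (g e) = g (RE e) := LinearMap.congr_fun hRg e
  have rotaBaxterE := hRE.map_apply g t e
  simp only [LinearMap.add_apply, LinearMap.sub_apply, LinearMap.comp_apply, LinearMap.smul_apply,
    LinearMap.id_apply, ρ_apply, ΔM_apply, RM_apply, lTensor_map, rTensor_map,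
    TensorProduct.map_map, hRg, hφ, operatorDefect, tensorMap_sub_right]
  linear_combination (norm := module) rotaBaxterE

theorem na2Cocycle_of_comp_eq (hC : IsRBLC lam ΔC RC) (hE : IsRBLC lam ΔE RE)
    (homg : IsHom ΔE RE ΔM RM g) (hg : Function.Surjective g)
    (hh : h ∘ₗ g = cobracketDefect ΔC ΔE t) (hρ : ρ ∘ₗ g = TensorProduct.map g t ∘ₗ ΔE)
    (hφ : φ ∘ₗ g = operatorDefect RC RE t) :
    NA2Cocycle lam ΔC RC ΔM RM h ρ φ := by
  obtain ⟨antiC, jacobiC, rbC⟩ := hC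
  obtain ⟨antiE, jacobiE, rbE⟩ := hE
  obtain ⟨hΔg, hRg⟩ := homg
  exact ⟨inducedCocycle_antisymm antiC antiE hg hh,
    inducedCocycle_coJacobi jacobiC jacobiE antiE hg hh hρ,
    inducedCocycle_coaction jacobiE hΔg hg hh hρ,
    inducedCocycle_coderivation jacobiE hΔg hg hρ,
    inducedCocycle_rotaBaxter_cobracket rbC rbE antiE hΔg hRg hg hh hρ hφ,
    inducedCocycle_rotaBaxter_coaction rbE hΔg hRg hg hρ hφ⟩

end Extension

theorem stmt7 (lam : k) (ΔC : C →ₗ[k] C ⊗[k] C) (RC : C →ₗ[k] C)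
    (ΔM : M →ₗ[k] M ⊗[k] M) (RM : M →ₗ[k] M)
    (ΔE : E →ₗ[k] E ⊗[k] E) (RE : E →ₗ[k] E)
    (hC : IsRBLC lam ΔC RC) (hM : IsRBLC lam ΔM RM) (hE : IsRBLC lam ΔE RE)
    (f : C →ₗ[k] E) (g : E →ₗ[k] M)
    (homf : IsHom ΔC RC ΔE RE f) (homg : IsHom ΔE RE ΔM RM g)
    (injf : Function.Injective f) (surjg : Function.Surjective g)
    (hexact : LinearMap.range f = LinearMap.ker g)
    (t : E →ₗ[k] C) (ht : t ∘ₗ f = LinearMap.id) :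
    -- `h_t`, `ρ_t`, `φ_t` are well defined, i.e. independent of the choice of
    -- preimage under `g`:
    ((∀ e e' : E, g e = g e' →
        (TensorProduct.map t t) (ΔE e) - ΔC (t e)
          = (TensorProduct.map t t) (ΔE e') - ΔC (t e')) ∧
     (∀ e e' : E, g e = g e' →
        (TensorProduct.map g t) (ΔE e) = (TensorProduct.map g t) (ΔE e')) ∧
     (∀ e e' : E, g e = g e' → t (RE e) - RC (t e) = t (RE e') - RC (t e'))) ∧
    -- and the resulting triple `(h_t, ρ_t, φ_t)` is a non-abelian 2-cocycle:
    (∀ (hT : M →ₗ[k] C ⊗[k] C) (ρT : M →ₗ[k] M ⊗[k] C) (φT : M →ₗ[k] C),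
      hT ∘ₗ g = TensorProduct.map t t ∘ₗ ΔE - ΔC ∘ₗ t →
      ρT ∘ₗ g = TensorProduct.map g t ∘ₗ ΔE →
      φT ∘ₗ g = t ∘ₗ RE - RC ∘ₗ t →
      NA2Cocycle lam ΔC RC ΔM RM hT ρT φT) := by
  have hgf : g ∘ₗ f = 0 := range_le_ker_iff.1 hexact.le
  have hh := factorsThrough_of_comp_eq_zero hexact.ge (cobracketDefect_comp_eq_zero homf.1 ht)
  have hρ := factorsThrough_of_comp_eq_zero hexact.ge
    (map_comp_cobracket_comp_eq_zero (t := t) homf.1 hgf)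
  have hφ := factorsThrough_of_comp_eq_zero hexact.ge (operatorDefect_comp_eq_zero homf.2 ht)
  exact ⟨⟨fun _ _ h ↦ hh h, fun _ _ h ↦ hρ h, fun _ _ h ↦ hφ h⟩,
    fun _ _ _ ↦ na2Cocycle_of_comp_eq hC hE homg surjg⟩

end
end

section
/- Let 0 → C →f E →g M → 0 be a non-abelian extension of λ-weighted Rota-Baxter Lie coalgebras, let t₁ and t₂ be two retractions, and let (h₁, ρ₁, φ₁) and (h₂, ρ₂, φ₂) be the non-abelian 2-cocycles they induce. Then (h₁, ρ₁, φ₁) and (h₂, ρ₂, φ₂) are equivalent; explicitly, the linear map s : M → C given by s(g(e)) = t₂(e) − t₁(e) is well defined and satisfies h₂ − h₁ = (s⊗I)ρ₁ − τ(s⊗I)ρ₁ + (s⊗s)Δ_M − Δ_C s, ρ₂ − ρ₁ = (I⊗s)Δ_M, and φ₂ − φ₁ = sR_M − R_C s. -/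
open TensorProduct LinearMap

section

variable {k : Type*} [Field k]
variable {C : Type*} [AddCommGroup C] [Module k C]
variable {M : Type*} [AddCommGroup M] [Module k M]
variable {E : Type*} [AddCommGroup E] [Module k E]

/-
Two retractions agree on the image of `f`, which is the kernel of `g`, so `t₂ = t₁ + s ∘ g` for a
linear map `s` on the quotient. Substituting this into the formulas for the induced maps and using
that `g` is a homomorphism expresses each difference, precomposed with `g`, through `s`; as `g` is
surjective it may be cancelled. For `h`, the mixed term `(t₁ ⊗ s g) Δ` equals `-τ (s g ⊗ t₁) Δ` by
co-antisymmetry of `Δ`, which explains the `τ` in the formula for `h₂ - h₁`.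
-/

section Ring

variable {R A B Q : Type*} [Ring R] [AddCommGroup A] [AddCommGroup B] [AddCommGroup Q]
  [Module R A] [Module R B] [Module R Q]

theorem ker_le_ker_sub_of_comp_eq_comp {D : Type*} [AddCommGroup D] [Module R D]
    {f : A →ₗ[R] B} {g : B →ₗ[R] Q} {t₁ t₂ : B →ₗ[R] D}
    (hfg : ker g ≤ range f) (ht : t₁ ∘ₗ f = t₂ ∘ₗ f) : ker g ≤ ker (t₂ - t₁) :=
  hfg.trans <| range_le_ker_iff.mpr <| by rw [sub_comp, ht, sub_self]

theorem induced_operator_sub {RA : A →ₗ[R] A} {RB : B →ₗ[R] B} {RQ : Q →ₗ[R] Q}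
    {g : B →ₗ[R] Q} {t₁ t₂ : B →ₗ[R] A} {s : Q →ₗ[R] A} {φ₁ φ₂ : Q →ₗ[R] A}
    (hg : Function.Surjective g) (hRg : RQ ∘ₗ g = g ∘ₗ RB) (hs : s ∘ₗ g = t₂ - t₁)
    (hφ₁ : φ₁ ∘ₗ g = t₁ ∘ₗ RB - RA ∘ₗ t₁) (hφ₂ : φ₂ ∘ₗ g = t₂ ∘ₗ RB - RA ∘ₗ t₂) :
    φ₂ - φ₁ = s ∘ₗ RQ - RA ∘ₗ s := by
  rw [← cancel_right hg]
  calc (φ₂ - φ₁) ∘ₗ g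
      = (t₂ - t₁) ∘ₗ RB - RA ∘ₗ (t₂ - t₁) := by
        rw [sub_comp, hφ₁, hφ₂, sub_comp, comp_sub]
        abel
    _ = (s ∘ₗ RQ - RA ∘ₗ s) ∘ₗ g := by
        rw [← hs, sub_comp, comp_assoc, comp_assoc, comp_assoc, hRg]

end Ring

section CommRing

variable {R A B Q : Type*} [CommRing R] [AddCommGroup A] [AddCommGroup B] [AddCommGroup Q]
  [Module R A] [Module R B] [Module R Q]

theorem comm_comp_map_comp_of_eq_neg_comm {D : Type*} [AddCommGroup D] [Module R D]
    {Δ : B →ₗ[R] B ⊗[R] B} (hΔ : Δ = -((TensorProduct.comm R B B).toLinearMap ∘ₗ Δ))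
    (u : B →ₗ[R] A) (v : B →ₗ[R] D) :
    (TensorProduct.comm R A D).toLinearMap ∘ₗ TensorProduct.map u v ∘ₗ Δ =
      -(TensorProduct.map v u ∘ₗ Δ) := by
  have hcomm : (TensorProduct.comm R B B).toLinearMap ∘ₗ Δ = -Δ := neg_eq_iff_eq_neg.mp hΔ.symm
  rw [← comp_assoc, ← TensorProduct.map_comp_comm_eq, comp_assoc, hcomm, comp_neg]

theorem map_add_map_add_comp_of_eq_neg_comm
    {Δ : B →ₗ[R] B ⊗[R] B} (hΔ : Δ = -((TensorProduct.comm R B B).toLinearMap ∘ₗ Δ))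
    (t u : B →ₗ[R] A) :
    TensorProduct.map (t + u) (t + u) ∘ₗ Δ =
      TensorProduct.map t t ∘ₗ Δ + TensorProduct.map u t ∘ₗ Δ
        - (TensorProduct.comm R A A).toLinearMap ∘ₗ TensorProduct.map u t ∘ₗ Δ
        + TensorProduct.map u u ∘ₗ Δ := by
  rw [comm_comp_map_comp_of_eq_neg_comm hΔ]
  simp only [TensorProduct.map_add_left, TensorProduct.map_add_right, add_comp]
  abel

theorem induced_coaction_sub {ΔB : B →ₗ[R] B ⊗[R] B} {ΔQ : Q →ₗ[R] Q ⊗[R] Q}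
    {g : B →ₗ[R] Q} {t₁ t₂ : B →ₗ[R] A} {s : Q →ₗ[R] A} {ρ₁ ρ₂ : Q →ₗ[R] Q ⊗[R] A}
    (hg : Function.Surjective g) (hΔg : TensorProduct.map g g ∘ₗ ΔB = ΔQ ∘ₗ g)
    (hs : s ∘ₗ g = t₂ - t₁)
    (hρ₁ : ρ₁ ∘ₗ g = TensorProduct.map g t₁ ∘ₗ ΔB)
    (hρ₂ : ρ₂ ∘ₗ g = TensorProduct.map g t₂ ∘ₗ ΔB) :
    ρ₂ - ρ₁ = lTensor Q s ∘ₗ ΔQ := by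
  obtain rfl : t₂ = t₁ + s ∘ₗ g := eq_add_of_sub_eq' hs.symm
  rw [← cancel_right hg]
  calc (ρ₂ - ρ₁) ∘ₗ g
      = TensorProduct.map g (s ∘ₗ g) ∘ₗ ΔB := by
        rw [sub_comp, hρ₁, hρ₂, TensorProduct.map_add_right, add_comp, add_sub_cancel_left]
    _ = (lTensor Q s ∘ₗ ΔQ) ∘ₗ g := by
        rw [comp_assoc, ← hΔg, ← comp_assoc, lTensor_comp_map]

theorem induced_cocycle_sub {ΔA : A →ₗ[R] A ⊗[R] A} {ΔB : B →ₗ[R] B ⊗[R] B}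
    {ΔQ : Q →ₗ[R] Q ⊗[R] Q} {g : B →ₗ[R] Q} {t₁ t₂ : B →ₗ[R] A} {s : Q →ₗ[R] A}
    {h₁ h₂ : Q →ₗ[R] A ⊗[R] A} {ρ₁ : Q →ₗ[R] Q ⊗[R] A}
    (hΔB : ΔB = -((TensorProduct.comm R B B).toLinearMap ∘ₗ ΔB))
    (hg : Function.Surjective g) (hΔg : TensorProduct.map g g ∘ₗ ΔB = ΔQ ∘ₗ g)
    (hs : s ∘ₗ g = t₂ - t₁)
    (hh₁ : h₁ ∘ₗ g = TensorProduct.map t₁ t₁ ∘ₗ ΔB - ΔA ∘ₗ t₁)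
    (hρ₁ : ρ₁ ∘ₗ g = TensorProduct.map g t₁ ∘ₗ ΔB)
    (hh₂ : h₂ ∘ₗ g = TensorProduct.map t₂ t₂ ∘ₗ ΔB - ΔA ∘ₗ t₂) :
    h₂ - h₁ = TensorProduct.map s LinearMap.id ∘ₗ ρ₁
      - (TensorProduct.comm R A A).toLinearMap ∘ₗ TensorProduct.map s LinearMap.id ∘ₗ ρ₁
      + TensorProduct.map s s ∘ₗ ΔQ - ΔA ∘ₗ s := by
  obtain rfl : t₂ = t₁ + s ∘ₗ g := eq_add_of_sub_eq' hs.symm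
  have hsρ : (TensorProduct.map s LinearMap.id ∘ₗ ρ₁) ∘ₗ g =
      TensorProduct.map (s ∘ₗ g) t₁ ∘ₗ ΔB := by
    rw [comp_assoc, hρ₁, ← comp_assoc, ← TensorProduct.map_comp, id_comp]
  have hsΔ : (TensorProduct.map s s ∘ₗ ΔQ) ∘ₗ g =
      TensorProduct.map (s ∘ₗ g) (s ∘ₗ g) ∘ₗ ΔB := by
    rw [comp_assoc, ← hΔg, ← comp_assoc, ← TensorProduct.map_comp]
  rw [← cancel_right hg]
  calc (h₂ - h₁) ∘ₗ g
      = TensorProduct.map (s ∘ₗ g) t₁ ∘ₗ ΔB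
          - (TensorProduct.comm R A A).toLinearMap ∘ₗ TensorProduct.map (s ∘ₗ g) t₁ ∘ₗ ΔB
          + TensorProduct.map (s ∘ₗ g) (s ∘ₗ g) ∘ₗ ΔB - ΔA ∘ₗ s ∘ₗ g := by
        rw [sub_comp, hh₁, hh₂, map_add_map_add_comp_of_eq_neg_comm hΔB, comp_add]
        abel
    _ = _ := by
        rw [sub_comp, add_comp, sub_comp, comp_assoc g _ (TensorProduct.comm R A A).toLinearMap,
          hsρ, hsΔ, comp_assoc]

theorem stmt8_general {ΔA : A →ₗ[R] A ⊗[R] A} {RA : A →ₗ[R] A}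
    {ΔQ : Q →ₗ[R] Q ⊗[R] Q} {RQ : Q →ₗ[R] Q} {ΔB : B →ₗ[R] B ⊗[R] B} {RB : B →ₗ[R] B}
    (hΔB : ΔB = -((TensorProduct.comm R B B).toLinearMap ∘ₗ ΔB))
    {f : A →ₗ[R] B} {g : B →ₗ[R] Q}
    (hΔg : TensorProduct.map g g ∘ₗ ΔB = ΔQ ∘ₗ g) (hRg : RQ ∘ₗ g = g ∘ₗ RB)
    (hg : Function.Surjective g) (hfg : ker g ≤ range f)
    {t₁ t₂ : B →ₗ[R] A} (ht : t₁ ∘ₗ f = t₂ ∘ₗ f)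
    {h₁ h₂ : Q →ₗ[R] A ⊗[R] A} {ρ₁ ρ₂ : Q →ₗ[R] Q ⊗[R] A} {φ₁ φ₂ : Q →ₗ[R] A}
    (hh₁ : h₁ ∘ₗ g = TensorProduct.map t₁ t₁ ∘ₗ ΔB - ΔA ∘ₗ t₁)
    (hρ₁ : ρ₁ ∘ₗ g = TensorProduct.map g t₁ ∘ₗ ΔB)
    (hφ₁ : φ₁ ∘ₗ g = t₁ ∘ₗ RB - RA ∘ₗ t₁)
    (hh₂ : h₂ ∘ₗ g = TensorProduct.map t₂ t₂ ∘ₗ ΔB - ΔA ∘ₗ t₂)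
    (hρ₂ : ρ₂ ∘ₗ g = TensorProduct.map g t₂ ∘ₗ ΔB)
    (hφ₂ : φ₂ ∘ₗ g = t₂ ∘ₗ RB - RA ∘ₗ t₂) :
    (∀ b b' : B, g b = g b' → t₂ b - t₁ b = t₂ b' - t₁ b') ∧
    ∀ s : Q →ₗ[R] A, s ∘ₗ g = t₂ - t₁ →
      h₂ - h₁ = TensorProduct.map s LinearMap.id ∘ₗ ρ₁
        - (TensorProduct.comm R A A).toLinearMap ∘ₗ TensorProduct.map s LinearMap.id ∘ₗ ρ₁
        + TensorProduct.map s s ∘ₗ ΔQ - ΔA ∘ₗ s ∧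
      ρ₂ - ρ₁ = lTensor Q s ∘ₗ ΔQ ∧
      φ₂ - φ₁ = s ∘ₗ RQ - RA ∘ₗ s := by
  refine ⟨fun b b' hb => ?_, fun s hs => ⟨?_, ?_, ?_⟩⟩
  · exact sub_mem_ker_iff.mp (ker_le_ker_sub_of_comp_eq_comp hfg ht (sub_mem_ker_iff.mpr hb))
  · exact induced_cocycle_sub hΔB hg hΔg hs hh₁ hρ₁ hh₂
  · exact induced_coaction_sub hg hΔg hs hρ₁ hρ₂
  · exact induced_operator_sub hg hRg hs hφ₁ hφ₂

end CommRing

theorem stmt8 (lam : k) (ΔC : C →ₗ[k] C ⊗[k] C) (RC : C →ₗ[k] C)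
    (ΔM : M →ₗ[k] M ⊗[k] M) (RM : M →ₗ[k] M)
    (ΔE : E →ₗ[k] E ⊗[k] E) (RE : E →ₗ[k] E)
    (hC : IsRBLC lam ΔC RC) (hM : IsRBLC lam ΔM RM) (hE : IsRBLC lam ΔE RE)
    (f : C →ₗ[k] E) (g : E →ₗ[k] M)
    (homf : IsHom ΔC RC ΔE RE f) (homg : IsHom ΔE RE ΔM RM g)
    (injf : Function.Injective f) (surjg : Function.Surjective g)
    (hexact : LinearMap.range f = LinearMap.ker g)
    (t₁ t₂ : E →ₗ[k] C) (ht₁ : t₁ ∘ₗ f = LinearMap.id) (ht₂ : t₂ ∘ₗ f = LinearMap.id)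
    (h₁ : M →ₗ[k] C ⊗[k] C) (ρ₁ : M →ₗ[k] M ⊗[k] C) (φ₁ : M →ₗ[k] C)
    (h₂ : M →ₗ[k] C ⊗[k] C) (ρ₂ : M →ₗ[k] M ⊗[k] C) (φ₂ : M →ₗ[k] C)
    (hh₁ : h₁ ∘ₗ g = TensorProduct.map t₁ t₁ ∘ₗ ΔE - ΔC ∘ₗ t₁)
    (hρ₁ : ρ₁ ∘ₗ g = TensorProduct.map g t₁ ∘ₗ ΔE)
    (hφ₁ : φ₁ ∘ₗ g = t₁ ∘ₗ RE - RC ∘ₗ t₁)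
    (hh₂ : h₂ ∘ₗ g = TensorProduct.map t₂ t₂ ∘ₗ ΔE - ΔC ∘ₗ t₂)
    (hρ₂ : ρ₂ ∘ₗ g = TensorProduct.map g t₂ ∘ₗ ΔE)
    (hφ₂ : φ₂ ∘ₗ g = t₂ ∘ₗ RE - RC ∘ₗ t₂) :
    -- `s(g(e)) = t₂(e) − t₁(e)` is well defined:
    (∀ e e' : E, g e = g e' → t₂ e - t₁ e = t₂ e' - t₁ e') ∧
    -- and it realizes an equivalence between the two induced 2-cocycles:
    (∀ s : M →ₗ[k] C, s ∘ₗ g = t₂ - t₁ →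
      EquivVia ΔC RC ΔM RM s h₁ ρ₁ φ₁ h₂ ρ₂ φ₂) :=
  stmt8_general hE.1 homg.1 homg.2 surjg hexact.ge (ht₁.trans ht₂.symm) hh₁ hρ₁ hφ₁ hh₂ hρ₂ hφ₂

end
end
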